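/- Let A be a compact infinite metric space carrying an upper α-regular measure μ with μ(A) > 0, let w be a bounded SLP weight on A, and let s > α. Then there exists a constant C₂ > 0, independent of N, such that every N-point (s,w)-energy minimizing configuration ω*_N on A satisfies δ(ω*_N) ≥ C₂ · N^{−1/α} for all N ≥ 2; consequently the N-point best-packing distance satisfies δ_N(A) ≥ C₂ · N^{−1/α} for all N ≥ 2. -/

import Mathlib

open Metric MeasureTheory Filter
open scoped ENNReal NNReal

noncomputable section

variable {A : Type*} [MetricSpace A]

/-- The separation distance `δ(ω_N)` of a configuration of `N` points. -/
def sepDist {N : ℕ} (x : Fin N → A) : ℝ :=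
  sInf {d : ℝ | ∃ i j : Fin N, i ≠ j ∧ d = dist (x i) (x j)}

/-- The mesh norm (covering radius) `ρ(ω_N, K)` of a configuration with respect to `K`. -/
def meshNorm {N : ℕ} (x : Fin N → A) (K : Set A) : ℝ :=
  sSup {d : ℝ | ∃ y ∈ K, d = ⨅ i : Fin N, dist y (x i)}

/-- The weighted Riesz `(s,w)`-energy of a configuration. -/
def rieszEnergy {N : ℕ} (s : ℝ) (w : A → A → ℝ) (x : Fin N → A) : ℝ :=
  ∑ i : Fin N, ∑ j : Fin N, if i = j then 0 else w (x i) (x j) / dist (x i) (x j) ^ s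

/-- `x` is an `N`-point `(s,w)`-energy minimizing configuration on `K`. -/
def IsEnergyMinimizer {N : ℕ} (s : ℝ) (w : A → A → ℝ) (K : Set A) (x : Fin N → A) : Prop :=
  Function.Injective x ∧ (∀ i, x i ∈ K) ∧
    ∀ y : Fin N → A, Function.Injective y → (∀ i, y i ∈ K) →
      rieszEnergy s w x ≤ rieszEnergy s w y

/-- The `N`-point best-packing distance `δ_N(K)`. -/
def bestPackingDist (K : Set A) (N : ℕ) : ℝ :=
  sSup {d : ℝ | ∃ x : Fin N → A, Function.Injective x ∧ (∀ i, x i ∈ K) ∧ d = sepDist x}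

/-- The `N`-point mesh norm `ρ_N(K)`. -/
def meshNormN (K : Set A) (N : ℕ) : ℝ :=
  sInf {d : ℝ | ∃ x : Fin N → A, Function.Injective x ∧ (∀ i, x i ∈ K) ∧ d = meshNorm x K}

/-- The minimal `N`-point `(s,w)`-energy `𝓔_s^w(N,K)`. -/
def minEnergy (s : ℝ) (w : A → A → ℝ) (K : Set A) (N : ℕ) : ℝ :=
  sInf {E : ℝ | ∃ x : Fin N → A, Function.Injective x ∧ (∀ i, x i ∈ K) ∧ E = rieszEnergy s w x}

/-- `μ` is upper `α`-regular with constant `C₀`. -/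
def IsUpperRegular [MeasurableSpace A] (μ : Measure A) (α C₀ : ℝ) : Prop :=
  ∀ (x : A) (r : ℝ), 0 < r → r ≤ diam (Set.univ : Set A) →
    μ (closedBall x r) ≤ ENNReal.ofReal (C₀ * r ^ α)

/-- `μ` is lower `α`-regular with constant `c₀`. -/
def IsLowerRegular [MeasurableSpace A] (μ : Measure A) (α c₀ : ℝ) : Prop :=
  ∀ (x : A) (r : ℝ), 0 < r → r ≤ diam (Set.univ : Set A) →
    ENNReal.ofReal (c₀⁻¹ * r ^ α) ≤ μ (closedBall x r)

/-- `w` is an SLP weight on `K`: symmetric, lower semi-continuous on `K × K`,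
nonnegative, and positive on the diagonal. -/
def IsSLPWeight (w : A → A → ℝ) (K : Set A) : Prop :=
  (∀ x ∈ K, ∀ y ∈ K, 0 ≤ w x y) ∧
  (∀ x ∈ K, ∀ y ∈ K, w x y = w y x) ∧
  LowerSemicontinuousOn (fun p : A × A => w p.1 p.2) (K ×ˢ K) ∧
  (∀ x ∈ K, 0 < w x x)

/-!
If the `r`-balls around `N` points cover at most half of the mass of `μ`, then averaging over the
other half, with a dyadic tail estimate that needs `s > α`, gives a point `z` far from all of them
at which `∑ dist z (x j) ^ (-s)` is of order `r ^ (-s)`. Upper regularity allows `r` of order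
`N ^ (-1 / α)`. Moving the `i`-th point of a minimizer to `z` cannot lower the energy, so the
interaction of `x i` with any `x j` is also at most of order `r ^ (-s)`. As `w` is bounded below
near the diagonal, close points `x i` and `x j` are therefore at distance at least of order `r`.
The packing bound does not go through minimizers, whose existence would need an argument of its
own: far points are chosen greedily.
-/

section FarPoints

variable {X ι : Type*} [PseudoMetricSpace X]

/-- The points at distance more than `r` from each of the points `x j`, `j ∈ J`. -/
def farSet (J : Finset ι) (x : ι → X) (r : ℝ) : Set X :=
  {z | ∀ j ∈ J, r < dist z (x j)}

lemma compl_farSet (J : Finset ι) (x : ι → X) (r : ℝ) :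
    (farSet J x r)ᶜ = ⋃ j ∈ J, closedBall (x j) r := by
  ext z
  simp [farSet]

lemma measurableSet_farSet [MeasurableSpace X] [OpensMeasurableSpace X] (J : Finset ι) (x : ι → X)
    (r : ℝ) : MeasurableSet (farSet J x r) := by
  rw [← MeasurableSet.compl_iff, compl_farSet]
  exact J.measurableSet_biUnion fun _ _ => measurableSet_closedBall

lemma exists_finset_card_eq_pairwise_lt_dist {N : ℕ} {r : ℝ} (hr : 0 ≤ r)
    (h : ∀ t : Finset X, t.card ≤ N → (farSet t id r).Nonempty) :
    ∃ t : Finset X, t.card = N ∧ (t : Set X).Pairwise fun y z => r < dist y z := by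
  classical
  induction N with
  | zero => exact ⟨∅, by simp⟩
  | succ n ih =>
    obtain ⟨t, rfl, ht⟩ := ih fun t ht => h t (by omega)
    obtain ⟨z, hz⟩ := h t (by omega)
    have hzt : z ∉ t := fun hmem => (hr.trans_lt (hz z hmem)).ne' (dist_self z)
    refine ⟨insert z t, Finset.card_insert_of_notMem hzt, ?_⟩
    rw [Finset.coe_insert, Set.pairwise_insert]
    exact ⟨ht, fun y hy _ => ⟨hz y hy, dist_comm z y ▸ hz y hy⟩⟩

end FarPoints

/-- The constant in the bound `C * rieszTailConst α s * r ^ (α - s)` for the integral of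
`dist z x ^ (-s)` off the `r`-ball around `x`; it is the sum of `2 ^ α * (2 ^ (α - s)) ^ k` over
the dyadic shells. -/
def rieszTailConst (α s : ℝ) : ℝ :=
  2 ^ α * (1 - 2 ^ (α - s))⁻¹

lemma two_rpow_sub_lt_one {α s : ℝ} (hs : α < s) : (2 : ℝ) ^ (α - s) < 1 :=
  Real.rpow_lt_one_of_one_lt_of_neg one_lt_two (sub_neg.mpr hs)

lemma rieszTailConst_pos {α s : ℝ} (hs : α < s) : 0 < rieszTailConst α s :=
  mul_pos (Real.rpow_pos_of_pos two_pos α) (inv_pos.mpr (sub_pos.mpr (two_rpow_sub_lt_one hs)))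

lemma hasSum_dyadic_shells {α s : ℝ} (hs : α < s) (C : ℝ) {r : ℝ} (hr : 0 < r) :
    HasSum (fun k : ℕ => (2 ^ k * r) ^ (-s) * (C * (2 ^ (k + 1) * r) ^ α))
      (C * rieszTailConst α s * r ^ (α - s)) := by
  have hterm (k : ℕ) : (2 ^ k * r) ^ (-s) * (C * (2 ^ (k + 1) * r) ^ α) =
      C * 2 ^ α * r ^ (α - s) * ((2 : ℝ) ^ (α - s)) ^ k := by
    rw [Real.mul_rpow (by positivity) hr.le, Real.mul_rpow (by positivity) hr.le, pow_succ,
      Real.mul_rpow (by positivity) two_pos.le, sub_eq_add_neg, Real.rpow_add two_pos,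
      Real.rpow_add hr, mul_pow, ← Real.rpow_pow_comm two_pos.le, ← Real.rpow_pow_comm two_pos.le]
    ring
  have hsum := (hasSum_geometric_of_lt_one (by positivity) (two_rpow_sub_lt_one hs)).mul_left
    (C * 2 ^ α * r ^ (α - s))
  have hconst : C * 2 ^ α * r ^ (α - s) * (1 - 2 ^ (α - s))⁻¹ =
      C * rieszTailConst α s * r ^ (α - s) := by
    rw [rieszTailConst]
    ring
  simpa only [hterm, hconst] using hsum

lemma ofReal_dist_rpow_neg_le_tsum_indicator {X : Type*} [PseudoMetricSpace X] {s r : ℝ}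
    (hs : 0 ≤ s) (hr : 0 < r) {x z : X} (hz : r ≤ dist z x) :
    ENNReal.ofReal (dist z x ^ (-s)) ≤
      ∑' k : ℕ, (closedBall x (2 ^ (k + 1) * r)).indicator
        (fun _ => ENNReal.ofReal ((2 ^ k * r) ^ (-s))) z := by
  obtain ⟨k, hlower, hupper⟩ :=
    exists_nat_pow_near ((one_le_div hr).mpr hz) (one_lt_two (α := ℝ))
  rw [le_div_iff₀ hr] at hlower
  rw [div_lt_iff₀ hr] at hupper
  refine le_trans ?_ (ENNReal.le_tsum k)
  rw [Set.indicator_of_mem (mem_closedBall.mpr hupper.le)]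
  exact ENNReal.ofReal_le_ofReal
    (Real.rpow_le_rpow_of_nonpos (by positivity) hlower (neg_nonpos.mpr hs))

section BallGrowth

variable {X ι : Type*} [PseudoMetricSpace X] [MeasurableSpace X] {μ : Measure X} {α C : ℝ}

/-- Upper `α`-regularity of `μ` at all scales, without the restriction `r ≤ diam X` on the
radius. -/
def HasBallGrowth (μ : Measure X) (α C : ℝ) : Prop :=
  ∀ (x : X) (r : ℝ), 0 < r → μ (closedBall x r) ≤ ENNReal.ofReal (C * r ^ α)

lemma HasBallGrowth.isFiniteMeasure [BoundedSpace X] [Nonempty X] (hμ : HasBallGrowth μ α C) :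
    IsFiniteMeasure μ := by
  obtain ⟨a⟩ := ‹Nonempty X›
  obtain ⟨r, hr, hball⟩ := (Bornology.IsBounded.all Set.univ).subset_closedBall_lt 0 a
  exact ⟨(measure_mono hball).trans_lt ((hμ a r hr).trans_lt ENNReal.ofReal_lt_top)⟩

variable [OpensMeasurableSpace X]

lemma HasBallGrowth.half_measureReal_univ_le_farSet [IsFiniteMeasure μ] (hμ : HasBallGrowth μ α C)
    (hC : 0 ≤ C) {J : Finset ι} {r : ℝ} (hr : 0 < r)
    (hJ : J.card * (C * r ^ α) ≤ μ.real Set.univ / 2) (x : ι → X) :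
    μ.real Set.univ / 2 ≤ μ.real (farSet J x r) := by
  have hcover : μ.real (farSet J x r)ᶜ ≤ μ.real Set.univ / 2 := by
    calc μ.real (farSet J x r)ᶜ ≤ ∑ j ∈ J, μ.real (closedBall (x j) r) :=
          compl_farSet J x r ▸ measureReal_biUnion_finset_le J _
      _ ≤ ∑ _j ∈ J, C * r ^ α := Finset.sum_le_sum fun j _ =>
          ENNReal.toReal_le_of_le_ofReal (by positivity) (hμ (x j) r hr)
      _ = J.card * (C * r ^ α) := by rw [Finset.sum_const, nsmul_eq_mul]
      _ ≤ μ.real Set.univ / 2 := hJ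
  linarith [measureReal_add_measureReal_compl (μ := μ) (measurableSet_farSet J x r)]

lemma HasBallGrowth.setLIntegral_dist_rpow_neg_le (hμ : HasBallGrowth μ α C) (hC : 0 ≤ C)
    {s r : ℝ} (hs₀ : 0 ≤ s) (hs : α < s) (hr : 0 < r) {x : X} {D : Set X} (hD : MeasurableSet D)
    (hDx : ∀ z ∈ D, r ≤ dist z x) :
    ∫⁻ z in D, ENNReal.ofReal (dist z x ^ (-s)) ∂μ ≤
      ENNReal.ofReal (C * rieszTailConst α s * r ^ (α - s)) := by
  have hshells := hasSum_dyadic_shells hs C hr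
  calc ∫⁻ z in D, ENNReal.ofReal (dist z x ^ (-s)) ∂μ
      ≤ ∫⁻ z in D, ∑' k : ℕ, (closedBall x (2 ^ (k + 1) * r)).indicator
          (fun _ => ENNReal.ofReal ((2 ^ k * r) ^ (-s))) z ∂μ :=
        setLIntegral_mono' hD fun z hz =>
          ofReal_dist_rpow_neg_le_tsum_indicator hs₀ hr (hDx z hz)
    _ ≤ ∫⁻ z, ∑' k : ℕ, (closedBall x (2 ^ (k + 1) * r)).indicator
          (fun _ => ENNReal.ofReal ((2 ^ k * r) ^ (-s))) z ∂μ := setLIntegral_le_lintegral _ _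
    _ = ∑' k : ℕ, ENNReal.ofReal ((2 ^ k * r) ^ (-s)) * μ (closedBall x (2 ^ (k + 1) * r)) := by
        rw [lintegral_tsum fun k =>
          (measurable_const.indicator measurableSet_closedBall).aemeasurable]
        simp_rw [lintegral_indicator_const measurableSet_closedBall]
    _ ≤ ∑' k : ℕ, ENNReal.ofReal ((2 ^ k * r) ^ (-s) * (C * (2 ^ (k + 1) * r) ^ α)) := by
        refine ENNReal.tsum_le_tsum fun k => ?_
        rw [ENNReal.ofReal_mul (by positivity)]
        gcongr
        exact hμ x _ (by positivity)
    _ = ENNReal.ofReal (C * rieszTailConst α s * r ^ (α - s)) := by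
        rw [← ENNReal.ofReal_tsum_of_nonneg (fun k => by positivity) hshells.summable,
          hshells.tsum_eq]

lemma HasBallGrowth.setLIntegral_farSet_sum_le [IsFiniteMeasure μ] (hμ : HasBallGrowth μ α C)
    (hC : 0 ≤ C) {s r : ℝ} (hs₀ : 0 ≤ s) (hs : α < s) (hr : 0 < r) {J : Finset ι}
    (hJ : J.card * (C * r ^ α) ≤ μ.real Set.univ / 2) (x : ι → X) :
    ∫⁻ z in farSet J x r, ENNReal.ofReal (∑ j ∈ J, dist z (x j) ^ (-s)) ∂μ ≤
      ENNReal.ofReal (rieszTailConst α s * r ^ (-s)) * μ (farSet J x r) := by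
  have hκ := rieszTailConst_pos hs
  calc ∫⁻ z in farSet J x r, ENNReal.ofReal (∑ j ∈ J, dist z (x j) ^ (-s)) ∂μ
      = ∑ j ∈ J, ∫⁻ z in farSet J x r, ENNReal.ofReal (dist z (x j) ^ (-s)) ∂μ := by
        simp_rw [ENNReal.ofReal_sum_of_nonneg fun _ _ => Real.rpow_nonneg dist_nonneg (-s)]
        exact lintegral_finsetSum' _ fun _ _ => by fun_prop
    _ ≤ ∑ _j ∈ J, ENNReal.ofReal (C * rieszTailConst α s * r ^ (α - s)) :=
        Finset.sum_le_sum fun _ hj => hμ.setLIntegral_dist_rpow_neg_le hC hs₀ hs hr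
          (measurableSet_farSet J x r) fun _ hz => (hz _ hj).le
    _ = ENNReal.ofReal (rieszTailConst α s * r ^ (-s) * (J.card * (C * r ^ α))) := by
        rw [Finset.sum_const, ← ENNReal.ofReal_nsmul, nsmul_eq_mul, sub_eq_add_neg,
          Real.rpow_add hr]
        congr 1
        ring
    _ ≤ ENNReal.ofReal (rieszTailConst α s * r ^ (-s) * μ.real (farSet J x r)) := by
        gcongr
        exact hJ.trans (hμ.half_measureReal_univ_le_farSet hC hr hJ x)
    _ = ENNReal.ofReal (rieszTailConst α s * r ^ (-s)) * μ (farSet J x r) := by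
        rw [ENNReal.ofReal_mul (by positivity), ofReal_measureReal]

lemma HasBallGrowth.exists_mem_farSet_sum_le [IsFiniteMeasure μ] (hμ : HasBallGrowth μ α C)
    (hμ₀ : μ ≠ 0) (hC : 0 ≤ C) {s r : ℝ} (hs₀ : 0 ≤ s) (hs : α < s) (hr : 0 < r) {J : Finset ι}
    (hJ : J.card * (C * r ^ α) ≤ μ.real Set.univ / 2) (x : ι → X) :
    ∃ z ∈ farSet J x r, ∑ j ∈ J, dist z (x j) ^ (-s) ≤ rieszTailConst α s * r ^ (-s) := by
  have : NeZero μ := ⟨hμ₀⟩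
  have hmass : 0 < μ.real (farSet J x r) :=
    (half_pos measureReal_univ_pos).trans_le (hμ.half_measureReal_univ_le_farSet hC hr hJ x)
  obtain ⟨z, hz, hle⟩ := exists_le_setLAverage (μ := μ) (s := farSet J x r)
    (f := fun z => ENNReal.ofReal (∑ j ∈ J, dist z (x j) ^ (-s)))
    ((measureReal_ne_zero_iff (measure_ne_top μ _)).mp hmass.ne')
    (measure_ne_top μ _) (by fun_prop)
  rw [setLAverage_eq] at hle
  have hmean := ENNReal.div_le_of_le_mul (hμ.setLIntegral_farSet_sum_le hC hs₀ hs hr hJ x)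
  have hκ := rieszTailConst_pos hs
  exact ⟨z, hz, (ENNReal.ofReal_le_ofReal_iff (by positivity)).mp (hle.trans hmean)⟩

lemma HasBallGrowth.exists_separated_finset [IsFiniteMeasure μ]
    (hμ : HasBallGrowth μ α C) (hμ₀ : μ ≠ 0) (hC : 0 ≤ C) {N : ℕ} {r : ℝ} (hr : 0 < r)
    (hN : N * (C * r ^ α) ≤ μ.real Set.univ / 2) :
    ∃ t : Finset X, t.card = N ∧ (t : Set X).Pairwise fun y z => r < dist y z := by
  have : NeZero μ := ⟨hμ₀⟩
  refine exists_finset_card_eq_pairwise_lt_dist hr.le fun t ht => ?_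
  have htN : t.card * (C * r ^ α) ≤ μ.real Set.univ / 2 := hN.trans' (by gcongr)
  exact nonempty_of_measureReal_ne_zero ((half_pos measureReal_univ_pos).trans_le
    (hμ.half_measureReal_univ_le_farSet hC hr htN id)).ne'

end BallGrowth

lemma closedBall_diam_univ {X : Type*} [PseudoMetricSpace X] [BoundedSpace X] (a : X) :
    closedBall a (diam (Set.univ : Set X)) = Set.univ :=
  Set.eq_univ_of_forall fun y =>
    dist_le_diam_of_mem (Bornology.IsBounded.all _) (Set.mem_univ y) (Set.mem_univ a)

section UpperRegular

variable [BoundedSpace A] [Nontrivial A]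

variable (A) in
lemma diam_univ_pos : 0 < diam (Set.univ : Set A) :=
  diam_pos Set.nontrivial_univ (Bornology.IsBounded.all _)

variable [MeasurableSpace A] {μ : Measure A} {α C₀ : ℝ}

lemma IsUpperRegular.const_pos (hreg : IsUpperRegular μ α C₀) (hμ : μ ≠ 0) : 0 < C₀ := by
  obtain ⟨a⟩ : Nonempty A := inferInstance
  have hle := hreg a _ (diam_univ_pos A) le_rfl
  rw [closedBall_diam_univ] at hle
  have hpos := ENNReal.ofReal_pos.mp ((Measure.measure_univ_pos.mpr hμ).trans_le hle)
  exact pos_of_mul_pos_left hpos (Real.rpow_nonneg (diam_univ_pos A).le α)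

lemma IsUpperRegular.hasBallGrowth (hreg : IsUpperRegular μ α C₀) (hα : 0 ≤ α) (hC₀ : 0 ≤ C₀) :
    HasBallGrowth μ α C₀ := by
  intro x r hr
  rcases le_total r (diam (Set.univ : Set A)) with hle | hge
  · exact hreg x r hr hle
  · calc μ (closedBall x r) ≤ μ (closedBall x (diam (Set.univ : Set A))) :=
          measure_mono ((Set.subset_univ _).trans (closedBall_diam_univ x).ge)
      _ ≤ ENNReal.ofReal (C₀ * diam (Set.univ : Set A) ^ α) := hreg x _ (diam_univ_pos A) le_rfl
      _ ≤ ENNReal.ofReal (C₀ * r ^ α) := by gcongr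

end UpperRegular

lemma sum_sum_ite_eq_add_sum_erase {ι M : Type*} [Fintype ι] [DecidableEq ι] [AddCommMonoid M]
    (f : ι → ι → M) (i : ι) :
    (∑ a, ∑ b, if a = b then 0 else f a b) =
      (∑ a ∈ Finset.univ.erase i, ∑ b ∈ Finset.univ.erase i, if a = b then 0 else f a b) +
        ∑ b ∈ Finset.univ.erase i, (f i b + f b i) := by
  have hrow : (∑ b, if i = b then 0 else f i b) = ∑ b ∈ Finset.univ.erase i, f i b := by
    rw [← Finset.add_sum_erase _ _ (Finset.mem_univ i), if_pos rfl, zero_add]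
    exact Finset.sum_congr rfl fun b hb => if_neg (Finset.ne_of_mem_erase hb).symm
  have hcol : ∀ a ∈ Finset.univ.erase i, (∑ b, if a = b then 0 else f a b) =
      f a i + ∑ b ∈ Finset.univ.erase i, if a = b then 0 else f a b := fun a ha => by
    rw [← Finset.add_sum_erase _ _ (Finset.mem_univ i), if_neg (Finset.ne_of_mem_erase ha)]
  rw [← Finset.add_sum_erase _ _ (Finset.mem_univ i), hrow, Finset.sum_congr rfl hcol,
    Finset.sum_add_distrib, Finset.sum_add_distrib]
  abel

lemma injective_update_of_forall_ne {ι β : Type*} [DecidableEq ι] {x : ι → β}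
    (hx : Function.Injective x) {i : ι} {z : β} (hz : ∀ b, b ≠ i → z ≠ x b) :
    Function.Injective (Function.update x i z) := by
  intro a b hab
  rcases eq_or_ne a i with ha | ha <;> rcases eq_or_ne b i with hb | hb
  · rw [ha, hb]
  · rw [ha, Function.update_self, Function.update_of_ne hb] at hab
    exact absurd hab (hz b hb)
  · rw [hb, Function.update_self, Function.update_of_ne ha] at hab
    exact absurd hab.symm (hz a ha)
  · rw [Function.update_of_ne ha, Function.update_of_ne hb] at hab
    exact hx hab

section Energy

variable {N : ℕ} {s : ℝ} {w : A → A → ℝ}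

/-- The part of the energy due to the `i`-th point when it is placed at `z` and the other points
stay where they are. Both orders of each pair are counted, so that `w` need not be symmetric. -/
def pointPotential (s : ℝ) (w : A → A → ℝ) (x : Fin N → A) (i : Fin N) (z : A) : ℝ :=
  ∑ b ∈ Finset.univ.erase i, (w z (x b) + w (x b) z) / dist z (x b) ^ s

lemma rieszEnergy_update (s : ℝ) (w : A → A → ℝ) (x : Fin N → A) (i : Fin N) (z : A) :
    rieszEnergy s w (Function.update x i z) =
      (∑ a ∈ Finset.univ.erase i, ∑ b ∈ Finset.univ.erase i,
        if a = b then 0 else w (x a) (x b) / dist (x a) (x b) ^ s) + pointPotential s w x i z := by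
  rw [rieszEnergy, sum_sum_ite_eq_add_sum_erase _ i, pointPotential]
  congr 1
  · refine Finset.sum_congr rfl fun a ha => Finset.sum_congr rfl fun b hb => ?_
    rw [Function.update_of_ne (Finset.ne_of_mem_erase ha),
      Function.update_of_ne (Finset.ne_of_mem_erase hb)]
  · refine Finset.sum_congr rfl fun b hb => ?_
    rw [Function.update_self, Function.update_of_ne (Finset.ne_of_mem_erase hb),
      dist_comm (x b) z, add_div]

lemma IsEnergyMinimizer.pointPotential_le {K : Set A} {x : Fin N → A}
    (hx : IsEnergyMinimizer s w K x) (i : Fin N) {z : A} (hzK : z ∈ K)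
    (hz : ∀ b, b ≠ i → z ≠ x b) :
    pointPotential s w x i (x i) ≤ pointPotential s w x i z := by
  obtain ⟨hinj, hxK, hmin⟩ := hx
  have hle := hmin (Function.update x i z) (injective_update_of_forall_ne hinj hz)
    ((Function.forall_update_iff x fun _ y => y ∈ K).mpr ⟨hzK, fun b _ => hxK b⟩)
  rw [rieszEnergy_update] at hle
  nth_rewrite 1 [← Function.update_eq_self i x, rieszEnergy_update] at hle
  exact le_of_add_le_add_left hle

lemma pointPotential_le_mul_sum {M : ℝ} (hM : ∀ y z, w y z ≤ M) (x : Fin N → A) (i : Fin N)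
    (z : A) :
    pointPotential s w x i z ≤ 2 * M * ∑ b ∈ Finset.univ.erase i, dist z (x b) ^ (-s) := by
  rw [pointPotential, Finset.mul_sum]
  refine Finset.sum_le_sum fun b _ => ?_
  rw [Real.rpow_neg dist_nonneg, ← div_eq_mul_inv]
  gcongr
  linarith [hM z (x b), hM (x b) z]

lemma le_pointPotential (hw : ∀ y z, 0 ≤ w y z) (x : Fin N → A) {i j : Fin N} (hij : i ≠ j) :
    (w (x i) (x j) + w (x j) (x i)) / dist (x i) (x j) ^ s ≤ pointPotential s w x i (x i) := by
  have hnonneg (b : Fin N) : 0 ≤ (w (x i) (x b) + w (x b) (x i)) / dist (x i) (x b) ^ s :=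
    div_nonneg (add_nonneg (hw _ _) (hw _ _)) (Real.rpow_nonneg dist_nonneg s)
  exact Finset.single_le_sum (fun b _ => hnonneg b)
    (Finset.mem_erase.mpr ⟨hij.symm, Finset.mem_univ j⟩)

lemma IsSLPWeight.exists_forall_dist_lt_le [CompactSpace A] [Nonempty A]
    (hw : IsSLPWeight w Set.univ) :
    ∃ c > 0, ∃ η > 0, ∀ y z : A, dist y z < η → c ≤ w y z := by
  obtain ⟨-, -, hlsc, hpos⟩ := hw
  rw [Set.univ_prod_univ, lowerSemicontinuousOn_univ_iff] at hlsc
  have hdiag : LowerSemicontinuous fun y : A => w y y :=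
    hlsc.comp (continuous_id.prodMk continuous_id)
  obtain ⟨a, -, hmin⟩ := (hdiag.lowerSemicontinuousOn Set.univ).exists_isMinOn
    Set.univ_nonempty isCompact_univ
  have hunif : {p : A × A | w a a / 2 < w p.1 p.2} ∈ uniformity A := by
    rw [← nhdsSet_diagonal_eq_uniformity]
    refine (hlsc.isOpen_preimage (w a a / 2)).mem_nhdsSet.mpr ?_
    rintro ⟨y, z⟩ (rfl : y = z)
    exact (half_lt_self (hpos a trivial)).trans_le (hmin (Set.mem_univ y))
  obtain ⟨η, hη, hlt⟩ := mem_uniformity_dist.mp hunif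
  exact ⟨w a a / 2, half_pos (hpos a trivial), η, hη, fun y z hyz => (hlt hyz).le⟩

end Energy

section Separation

lemma le_sepDist {N : ℕ} (hN : 2 ≤ N) {x : Fin N → A} {d : ℝ}
    (h : ∀ i j, i ≠ j → d ≤ dist (x i) (x j)) : d ≤ sepDist x := by
  refine le_csInf ⟨_, ⟨0, by omega⟩, ⟨1, by omega⟩, by simp, rfl⟩ ?_
  rintro _ ⟨i, j, hij, rfl⟩
  exact h i j hij

lemma sepDist_le_dist {N : ℕ} (x : Fin N → A) {i j : Fin N} (hij : i ≠ j) :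
    sepDist x ≤ dist (x i) (x j) :=
  csInf_le ⟨0, by rintro _ ⟨i, j, -, rfl⟩; exact dist_nonneg⟩ ⟨i, j, hij, rfl⟩

lemma sepDist_le_bestPackingDist {K : Set A} (hK : Bornology.IsBounded K) {N : ℕ} (hN : 2 ≤ N)
    {x : Fin N → A} (hinj : Function.Injective x) (hxK : ∀ i, x i ∈ K) :
    sepDist x ≤ bestPackingDist K N := by
  refine le_csSup ⟨diam K, ?_⟩ ⟨x, hinj, hxK, rfl⟩
  rintro _ ⟨y, -, hyK, rfl⟩
  exact (sepDist_le_dist y (i := ⟨0, by omega⟩) (j := ⟨1, by omega⟩) (by simp)).trans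
    (dist_le_diam_of_mem hK (hyK _) (hyK _))

lemma le_bestPackingDist_of_pairwise {K : Set A} (hK : Bornology.IsBounded K) {r : ℝ}
    {t : Finset A} (ht : 2 ≤ t.card) (htK : (t : Set A) ⊆ K)
    (hpair : (t : Set A).Pairwise fun y z => r ≤ dist y z) :
    r ≤ bestPackingDist K t.card := by
  have hinj : Function.Injective fun i => (t.equivFin.symm i : A) :=
    Subtype.val_injective.comp t.equivFin.symm.injective
  calc r ≤ sepDist fun i => (t.equivFin.symm i : A) := le_sepDist ht fun i j hij =>
        hpair (t.equivFin.symm i).2 (t.equivFin.symm j).2 (hinj.ne hij)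
    _ ≤ bestPackingDist K t.card :=
        sepDist_le_bestPackingDist hK ht hinj fun i => htK (t.equivFin.symm i).2

lemma rpow_inv_mul_le_of_div_rpow_le {c L r d s : ℝ} (hc : 0 ≤ c) (hL : 0 < L) (hr : 0 < r)
    (hd : 0 < d) (hs : 0 < s) (h : c / d ^ s ≤ L * r ^ (-s)) : (c / L) ^ s⁻¹ * r ≤ d := by
  rw [← Real.rpow_le_rpow_iff (by positivity) hd.le hs, Real.mul_rpow (by positivity) hr.le,
    Real.rpow_inv_rpow (by positivity) hs.ne', div_mul_eq_mul_div, div_le_iff₀ hL]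
  rw [Real.rpow_neg hr.le, ← div_eq_mul_inv, div_le_div_iff₀ (by positivity) (by positivity)] at h
  rwa [mul_comm (d ^ s)]

variable [MeasurableSpace A] [OpensMeasurableSpace A] {μ : Measure A} [IsFiniteMeasure μ]
  {α C : ℝ} {w : A → A → ℝ} {c M η s r : ℝ} {N : ℕ}

lemma IsEnergyMinimizer.pointPotential_le_rpow_neg {x : Fin N → A}
    (hx : IsEnergyMinimizer s w Set.univ x) (hμ : HasBallGrowth μ α C) (hμ₀ : μ ≠ 0) (hC : 0 ≤ C)
    (hM₀ : 0 ≤ M) (hM : ∀ y z, w y z ≤ M) (hs₀ : 0 ≤ s) (hs : α < s) (hr : 0 < r)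
    (hN : N * (C * r ^ α) ≤ μ.real Set.univ / 2) (i : Fin N) :
    pointPotential s w x i (x i) ≤ 2 * M * (rieszTailConst α s * r ^ (-s)) := by
  have hcard : (Finset.univ.erase i).card ≤ N := card_finset_fin_le _
  obtain ⟨z, hzfar, hz⟩ := hμ.exists_mem_farSet_sum_le hμ₀ hC hs₀ hs hr
    (hN.trans' (by gcongr)) (J := Finset.univ.erase i) x
  have hzne (b : Fin N) (hb : b ≠ i) : z ≠ x b :=
    dist_pos.mp (hr.trans (hzfar b (Finset.mem_erase.mpr ⟨hb, Finset.mem_univ b⟩)))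
  calc pointPotential s w x i (x i) ≤ pointPotential s w x i z :=
        hx.pointPotential_le i (Set.mem_univ z) hzne
    _ ≤ 2 * M * ∑ b ∈ Finset.univ.erase i, dist z (x b) ^ (-s) := pointPotential_le_mul_sum hM x i z
    _ ≤ 2 * M * (rieszTailConst α s * r ^ (-s)) := by gcongr

lemma IsEnergyMinimizer.min_le_sepDist {x : Fin N → A}
    (hx : IsEnergyMinimizer s w Set.univ x) (hμ : HasBallGrowth μ α C) (hμ₀ : μ ≠ 0) (hC : 0 ≤ C)
    (hw : ∀ y z, 0 ≤ w y z) (hM₀ : 0 < M) (hM : ∀ y z, w y z ≤ M) (hc : 0 ≤ c)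
    (hwc : ∀ y z, dist y z < η → c ≤ w y z) (hs₀ : 0 < s) (hs : α < s) (hr : 0 < r)
    (hN₂ : 2 ≤ N) (hN : N * (C * r ^ α) ≤ μ.real Set.univ / 2) :
    min η ((c / (M * rieszTailConst α s)) ^ s⁻¹ * r) ≤ sepDist x := by
  refine le_sepDist hN₂ fun i j hij => ?_
  have hdist : 0 < dist (x i) (x j) := dist_pos.mpr (hx.1.ne hij)
  rcases le_or_gt η (dist (x i) (x j)) with hfar | hnear
  · exact (min_le_left _ _).trans hfar
  have hpair : 2 * c / dist (x i) (x j) ^ s ≤ 2 * M * (rieszTailConst α s * r ^ (-s)) := by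
    calc 2 * c / dist (x i) (x j) ^ s
        ≤ (w (x i) (x j) + w (x j) (x i)) / dist (x i) (x j) ^ s := by
          gcongr
          linarith [hwc _ _ hnear, hwc _ _ (dist_comm (x i) (x j) ▸ hnear)]
      _ ≤ pointPotential s w x i (x i) := le_pointPotential hw x hij
      _ ≤ 2 * M * (rieszTailConst α s * r ^ (-s)) :=
          hx.pointPotential_le_rpow_neg hμ hμ₀ hC hM₀.le hM hs₀.le hs hr hN i
  refine (min_le_right _ _).trans (rpow_inv_mul_le_of_div_rpow_le hc
    (mul_pos hM₀ (rieszTailConst_pos hs)) hr hdist hs₀ ?_)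
  rw [mul_div_assoc] at hpair
  linarith

lemma HasBallGrowth.le_bestPackingDist [BoundedSpace A] (hμ : HasBallGrowth μ α C) (hμ₀ : μ ≠ 0)
    (hC : 0 ≤ C) (hr : 0 < r) (hN₂ : 2 ≤ N) (hN : N * (C * r ^ α) ≤ μ.real Set.univ / 2) :
    r ≤ bestPackingDist (Set.univ : Set A) N := by
  obtain ⟨t, rfl, ht⟩ := hμ.exists_separated_finset hμ₀ hC hr hN
  exact le_bestPackingDist_of_pairwise (Bornology.IsBounded.all _) hN₂ (Set.subset_univ _)
    (ht.mono' fun _ _ => le_of_lt)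

end Separation

lemma natCast_mul_mul_rpow_eq {m C α : ℝ} (hm : 0 ≤ m) (hC : 0 < C) (hα : α ≠ 0) {N : ℕ}
    (hN : N ≠ 0) : N * (C * ((m / C) ^ (1 / α) * (N : ℝ) ^ (-(1 / α))) ^ α) = m := by
  rw [Real.mul_rpow (by positivity) (by positivity), ← Real.rpow_mul (by positivity),
    ← Real.rpow_mul (by positivity), neg_mul, one_div_mul_cancel hα, Real.rpow_one,
    Real.rpow_neg_one]
  field_simp

lemma min_mul_rpow_neg_le {η a b p : ℝ} (hη : 0 ≤ η) {N : ℕ} (hN : 1 ≤ N) (hp : 0 ≤ p) :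
    min η (a * b) * (N : ℝ) ^ (-p) ≤ min η (a * (b * (N : ℝ) ^ (-p))) := by
  have hle : (N : ℝ) ^ (-p) ≤ 1 :=
    Real.rpow_le_one_of_one_le_of_nonpos (Nat.one_le_cast.mpr hN) (neg_nonpos.mpr hp)
  rw [min_mul_of_nonneg _ _ (by positivity), mul_assoc]
  exact min_le_min_right _ (mul_le_of_le_one_right hη hle)

theorem stmt_1_general [BoundedSpace A] [Nontrivial A] [MeasurableSpace A]
    [OpensMeasurableSpace A] {α : ℝ} (hα : 0 < α) {μ : Measure A} {C₀ : ℝ}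
    (hreg : IsUpperRegular μ α C₀) (hμ : μ ≠ 0) {w : A → A → ℝ} (hw : ∀ y z, 0 ≤ w y z)
    {c η : ℝ} (hc : 0 < c) (hη : 0 < η) (hwc : ∀ y z, dist y z < η → c ≤ w y z)
    (hwbdd : ∃ M : ℝ, ∀ y z, w y z ≤ M) {s : ℝ} (hs : α < s) :
    ∃ C₂ > 0,
      (∀ N : ℕ, 2 ≤ N → ∀ x : Fin N → A, IsEnergyMinimizer s w Set.univ x →
        sepDist x ≥ C₂ * (N : ℝ) ^ (-(1 / α))) ∧
      (∀ N : ℕ, 2 ≤ N →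
        bestPackingDist (Set.univ : Set A) N ≥ C₂ * (N : ℝ) ^ (-(1 / α))) := by
  obtain ⟨M, hM⟩ := hwbdd
  have hC₀ : 0 < C₀ := hreg.const_pos hμ
  have hgrowth : HasBallGrowth μ α C₀ := hreg.hasBallGrowth hα.le hC₀.le
  have : IsFiniteMeasure μ := hgrowth.isFiniteMeasure
  have : NeZero μ := ⟨hμ⟩
  obtain ⟨a⟩ : Nonempty A := inferInstance
  have hM₀ : 0 < M := hc.trans_le ((hwc a a (by rwa [dist_self])).trans (hM a a))
  have hmass : 0 < μ.real Set.univ / 2 := half_pos measureReal_univ_pos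
  set ρ : ℝ := (μ.real Set.univ / 2 / C₀) ^ (1 / α)
  have hρ : 0 < ρ := Real.rpow_pos_of_pos (div_pos hmass hC₀) _
  set τ : ℝ := (c / (M * rieszTailConst α s)) ^ s⁻¹
  have hτ : 0 < τ :=
    Real.rpow_pos_of_pos (div_pos hc (mul_pos hM₀ (rieszTailConst_pos hs))) _
  have hradius {N : ℕ} (hN : 2 ≤ N) : 0 < ρ * (N : ℝ) ^ (-(1 / α)) :=
    mul_pos hρ (Real.rpow_pos_of_pos (by positivity) _)
  have hfill {N : ℕ} (hN : 2 ≤ N) :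
      N * (C₀ * (ρ * (N : ℝ) ^ (-(1 / α))) ^ α) ≤ μ.real Set.univ / 2 :=
    (natCast_mul_mul_rpow_eq hmass.le hC₀ hα.ne' (by omega)).le
  refine ⟨min ρ (min η (τ * ρ)), lt_min hρ (lt_min hη (mul_pos hτ hρ)),
    fun N hN x hx => ?_, fun N hN => ?_⟩
  · calc min ρ (min η (τ * ρ)) * (N : ℝ) ^ (-(1 / α))
        ≤ min η (τ * ρ) * (N : ℝ) ^ (-(1 / α)) :=
          mul_le_mul_of_nonneg_right (min_le_right _ _) (by positivity)
      _ ≤ min η (τ * (ρ * (N : ℝ) ^ (-(1 / α)))) :=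
        min_mul_rpow_neg_le hη.le (by omega) (by positivity)
      _ ≤ sepDist x := hx.min_le_sepDist hgrowth hμ hC₀.le hw hM₀ hM hc.le hwc (hα.trans hs) hs
        (hradius hN) hN (hfill hN)
  · calc min ρ (min η (τ * ρ)) * (N : ℝ) ^ (-(1 / α))
        ≤ ρ * (N : ℝ) ^ (-(1 / α)) :=
          mul_le_mul_of_nonneg_right (min_le_left _ _) (by positivity)
      _ ≤ bestPackingDist Set.univ N :=
        hgrowth.le_bestPackingDist hμ hC₀.le (hradius hN) hN (hfill hN)

/-- Corollary `seps`: separation of weighted minimal energy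
configurations for bounded SLP weights and `s > α`, and the resulting lower bound
for the best-packing distance. -/
theorem stmt_1 {A : Type*} [MetricSpace A] [CompactSpace A] [Infinite A]
    [MeasurableSpace A] [BorelSpace A]
    (α : ℝ) (hα : 0 < α) (μ : Measure A) (C₀ : ℝ)
    (hreg : IsUpperRegular μ α C₀) (hμpos : 0 < μ Set.univ)
    (w : A → A → ℝ) (hw : IsSLPWeight w Set.univ)
    (hwbdd : ∃ M : ℝ, ∀ x y : A, w x y ≤ M)
    (s : ℝ) (hs : α < s) :
    ∃ C₂ > 0,
      (∀ N : ℕ, 2 ≤ N → ∀ x : Fin N → A, IsEnergyMinimizer s w Set.univ x →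
        sepDist x ≥ C₂ * (N : ℝ) ^ (-(1 / α))) ∧
      (∀ N : ℕ, 2 ≤ N →
        bestPackingDist (Set.univ : Set A) N ≥ C₂ * (N : ℝ) ^ (-(1 / α))) := by
  obtain ⟨c, hc, η, hη, hwc⟩ := hw.exists_forall_dist_lt_le
  exact stmt_1_general hα hreg (Measure.measure_univ_pos.mp hμpos)
    (fun y z => hw.1 y trivial z trivial) hc hη hwc hwbdd hs
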